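/- Let q be a prime power and let C be a plane projective curve of degree q+1 defined over GF(q^2) by a homogeneous polynomial F that is irreducible over GF(q^2) but not absolutely irreducible (i.e., F factors nontrivially over the algebraic closure of GF(q^2)). Then the number N of GF(q^2)-rational points of C satisfies N <= ((q+1)/2)^2; in particular every GF(q^2)-rational point of C lies in the common intersection of all the conjugate absolutely irreducible components of C. -/

import Mathlib

open MvPolynomial Module

/-- The set of points of the projective subspace of `PG(n-1, F)` determined by
the linear subspace `W` of `F^n`. -/
def projPts {F : Type} [Field F] {n : ℕ} (W : Submodule F (Fin n → F)) :
    Set (Projectivization F (Fin n → F)) :=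
  {P | P.submodule ≤ W}

/-- The set of `F`-rational points of the hypersurface of `PG(n-1, F)` defined by the
homogeneous polynomial `f`. -/
def hypersurfacePts {F : Type} [Field F] {n : ℕ} (f : MvPolynomial (Fin n) F) :
    Set (Projectivization F (Fin n → F)) :=
  {P | MvPolynomial.eval P.rep f = 0}

/-!
Let `K` be an algebraic extension of a field `F`, and let `f` be an irreducible form over `F` with a
proper factor over `K`. Applying an `F`-linear functional `K → F` to all coefficients turns a
polynomial over `K` into one over `F` and is linear over the polynomials with coefficients in `F`.
It follows that a nonconstant factor `g` of `f` over `K` divides a polynomial `a` over `F` only if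
`f ∣ a`: otherwise some functional would turn the cofactor `h` in `f = g * h` into a nonzero
multiple of `f` of degree less than that of `f`. In other words, no nonzero function on `f = 0`
defined over `F` vanishes on `g = 0`, so by going up every point of `f = 0`, in particular every
rational one, lies under a point of `g = 0`, and a rational point has only itself above it.

In the plane, choose `g` irreducible of degree at most half that of `f`. A functional turns `g` into
a nonzero form over `F` of the same degree, which vanishes at all rational points but is not
divisible by `g`. Bézout's bound for these two forms finishes the proof.
-/

open scoped LinearAlgebra.Projectivization

section Homogeneous

variable {σ R : Type*} [CommSemiring R]

lemma order_coe_le_totalDegree {p : MvPolynomial σ R} (hp : p ≠ 0) :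
    (p : MvPowerSeries σ R).order ≤ p.totalDegree := by
  obtain ⟨m, hm⟩ := MvPolynomial.ne_zero_iff.1 hp
  calc (p : MvPowerSeries σ R).order ≤ m.degree := MvPowerSeries.order_le (by rwa [coeff_coe])
    _ ≤ p.totalDegree := by exact_mod_cast le_totalDegree (mem_support_iff.2 hm)

lemma isHomogeneous_totalDegree_of_le_order {p : MvPolynomial σ R}
    (hp : (p.totalDegree : ℕ∞) ≤ (p : MvPowerSeries σ R).order) :
    p.IsHomogeneous p.totalDegree := by
  intro m hm
  have le_degree : (p.totalDegree : ℕ∞) ≤ m.degree :=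
    hp.trans (MvPowerSeries.order_le (by rwa [coeff_coe]))
  change Finsupp.weight (fun _ => 1) m = _
  rw [← Finsupp.degree_eq_weight_one]
  exact (le_totalDegree (mem_support_iff.2 hm)).antisymm (by exact_mod_cast le_degree)

lemma natCast_le_order_coe_of_isHomogeneous {p : MvPolynomial σ R} {n : ℕ}
    (hp : p.IsHomogeneous n) : (n : ℕ∞) ≤ (p : MvPowerSeries σ R).order :=
  MvPowerSeries.nat_le_order fun m hm => by
    rw [coeff_coe]
    exact hp.coeff_eq_zero hm.ne

lemma isHomogeneous_totalDegree_of_dvd [NoZeroDivisors R] {f g : MvPolynomial σ R} {n : ℕ}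
    (hf : f.IsHomogeneous n) (hf0 : f ≠ 0) (hgf : g ∣ f) :
    g.IsHomogeneous g.totalDegree := by
  obtain ⟨h, rfl⟩ := hgf
  have hg0 : g ≠ 0 := left_ne_zero_of_mul hf0
  have hh0 : h ≠ 0 := right_ne_zero_of_mul hf0
  refine isHomogeneous_totalDegree_of_le_order
    ((ENat.add_le_add_iff_right (ENat.natCast_ne_top h.totalDegree)).1 ?_)
  calc (g.totalDegree + h.totalDegree : ℕ∞) = n := by
        rw [← hf.totalDegree hf0, totalDegree_mul_of_isDomain hg0 hh0, Nat.cast_add]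
    _ ≤ ((g * h : MvPolynomial σ R) : MvPowerSeries σ R).order :=
        natCast_le_order_coe_of_isHomogeneous hf
    _ = (g : MvPowerSeries σ R).order + (h : MvPowerSeries σ R).order := by
        rw [coe_mul, MvPowerSeries.order_mul]
    _ ≤ (g : MvPowerSeries σ R).order + h.totalDegree := by
        gcongr
        exact order_coe_le_totalDegree hh0

lemma finrank_homogeneousSubmodule [StrongRankCondition R] [Fintype σ] (n : ℕ) :
    finrank R (homogeneousSubmodule σ R n) = (Fintype.card σ).multichoose n := by
  classical
  have degree_eq : {m : σ →₀ ℕ | m.degree = n} =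
      (Finset.finsuppAntidiag (Finset.univ : Finset σ) n : Set (σ →₀ ℕ)) := by
    ext m
    simp [Finsupp.degree_eq_sum]
  rw [homogeneousSubmodule_eq_finsupp_supported, degree_eq,
    (AddMonoidAlgebra.supportedEquivFinsupp _).finrank_eq, finrank_finsupp_self]
  simp [Finset.card_finsuppAntidiag_nat_eq_multichoose]

lemma eval_smul_of_isHomogeneous {f : MvPolynomial σ R} {n : ℕ} (hf : f.IsHomogeneous n) (c : R)
    (v : σ → R) : eval (c • v) f = c ^ n * eval v f := by
  rw [eval_eq, eval_eq, Finset.mul_sum]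
  refine Finset.sum_congr rfl fun m hm => ?_
  have degree_eq : ∑ i ∈ m.support, m i = n := (hf.degree_eq_sum_deg_support hm).symm
  simp only [Pi.smul_apply, smul_eq_mul, mul_pow, Finset.prod_mul_distrib,
    Finset.prod_pow_eq_pow_sum, degree_eq]
  ring

end Homogeneous

section Forms

variable {σ K : Type*} [Field K]

lemma eval_rep_mk_eq_zero_iff {f : MvPolynomial σ K} {n : ℕ} (hf : f.IsHomogeneous n)
    {v : σ → K} (hv : v ≠ 0) : eval (Projectivization.mk K v hv).rep f = 0 ↔ eval v f = 0 := by
  obtain ⟨c, hc⟩ := Projectivization.exists_smul_eq_mk_rep K v hv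
  rw [← hc, Units.smul_def, eval_smul_of_isHomogeneous hf]
  simp

lemma exists_mul_ne_mul_of_ne {P Q : ℙ K (σ → K)} (h : P ≠ Q) :
    ∃ i j, P.rep i * Q.rep j ≠ P.rep j * Q.rep i := by
  contrapose! h
  obtain ⟨j, hj⟩ := Function.ne_iff.1 Q.rep_nonzero
  rw [← P.mk_rep, ← Q.mk_rep, Projectivization.mk_eq_mk_iff']
  refine ⟨P.rep j / Q.rep j, funext fun i => ?_⟩
  rw [Pi.smul_apply, smul_eq_mul, div_mul_eq_mul_div, ← h, mul_div_cancel_right₀ _ hj]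

lemma exists_linearForm_eval_ne_zero {P Q : ℙ K (σ → K)} (h : P ≠ Q) :
    ∃ l : MvPolynomial σ K, l.IsHomogeneous 1 ∧ eval Q.rep l = 0 ∧ eval P.rep l ≠ 0 := by
  obtain ⟨i, j, hij⟩ := exists_mul_ne_mul_of_ne h
  refine ⟨C (Q.rep j) * X i - C (Q.rep i) * X j,
    (isHomogeneous_C_mul_X _ _).sub (isHomogeneous_C_mul_X _ _), ?_, ?_⟩
  · simp only [map_sub, map_mul, eval_C, eval_X]
    ring
  · simpa [sub_ne_zero, mul_comm] using hij

/-- The space of forms of degree `n` that vanish at all points of `S`. -/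
noncomputable def formsVanishingOn (S : Finset (ℙ K (σ → K))) (n : ℕ) :
    Submodule K (MvPolynomial σ K) :=
  homogeneousSubmodule σ K n ⊓ ⨅ P ∈ S, LinearMap.ker (aeval P.rep).toLinearMap

lemma mem_formsVanishingOn {S : Finset (ℙ K (σ → K))} {n : ℕ} {p : MvPolynomial σ K} :
    p ∈ formsVanishingOn S n ↔ p.IsHomogeneous n ∧ ∀ P ∈ S, eval P.rep p = 0 := by
  simp [formsVanishingOn, aeval_eq_eval]

lemma exists_mem_formsVanishingOn_eval_ne_zero {S : Finset (ℙ K (σ → K))} {P : ℙ K (σ → K)}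
    (hP : P ∉ S) {n : ℕ} (hn : S.card ≤ n) : ∃ p ∈ formsVanishingOn S n, eval P.rep p ≠ 0 := by
  have sep (Q : S) := exists_linearForm_eval_ne_zero (ne_of_mem_of_not_mem Q.2 hP).symm
  choose l hl hlQ hlP using sep
  obtain ⟨i, hi⟩ := Function.ne_iff.1 P.rep_nonzero
  refine ⟨(∏ Q, l Q) * X i ^ (n - S.card), mem_formsVanishingOn.2 ⟨?_, fun Q hQ => ?_⟩, ?_⟩
  · have prod_hom := IsHomogeneous.prod Finset.univ l (fun _ => 1) fun Q _ => hl Q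
    simpa [hn] using prod_hom.mul (isHomogeneous_X_pow i (n - S.card))
  · rw [map_mul, map_prod, Finset.prod_eq_zero (Finset.mem_univ ⟨Q, hQ⟩) (hlQ ⟨Q, hQ⟩), zero_mul]
  · simpa [Finset.prod_eq_zero_iff, hlP] using fun h => absurd h hi

instance [Finite σ] (n : ℕ) : Module.Finite K (homogeneousSubmodule σ K n) :=
  Module.Finite.iff_fg.2 (homogeneousSubmodule_fg σ K n)

instance [Finite σ] (S : Finset (ℙ K (σ → K))) (n : ℕ) : Module.Finite K (formsVanishingOn S n) :=
  Submodule.finiteDimensional_of_le inf_le_left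

lemma finrank_formsVanishingOn_add_card_le [Finite σ] {S : Finset (ℙ K (σ → K))} {n : ℕ}
    (hn : S.card ≤ n + 1) :
    finrank K (formsVanishingOn S n) + S.card ≤ finrank K (homogeneousSubmodule σ K n) := by
  classical
  induction S using Finset.induction with
  | empty =>
    rw [Finset.card_empty, add_zero]
    exact Submodule.finrank_mono inf_le_left
  | insert P S hP ih =>
    rw [Finset.card_insert_of_notMem hP] at hn ⊢
    obtain ⟨p, hpS, hpP⟩ := exists_mem_formsVanishingOn_eval_ne_zero hP (Nat.le_of_succ_le_succ hn)
    have lt : formsVanishingOn (insert P S) n < formsVanishingOn S n := by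
      refine SetLike.lt_iff_le_and_exists.2 ⟨fun r hr => ?_, p, hpS, fun hp => ?_⟩
      · rw [mem_formsVanishingOn] at hr ⊢
        exact ⟨hr.1, fun Q hQ => hr.2 Q (Finset.mem_insert_of_mem hQ)⟩
      · exact hpP ((mem_formsVanishingOn.1 hp).2 P (Finset.mem_insert_self P S))
    have finrank_lt := Submodule.finrank_lt_finrank_of_lt lt
    have finrank_S_le := ih (Nat.le_of_succ_le hn)
    omega

variable {A B : MvPolynomial σ K} {a : ℕ}

/-- The space of multiples of `A` by forms of degree `n`. -/
noncomputable def formMultiples (A : MvPolynomial σ K) (n : ℕ) : Submodule K (MvPolynomial σ K) :=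
  (homogeneousSubmodule σ K n).map (LinearMap.mulLeft K A)

lemma mem_formMultiples {p : MvPolynomial σ K} {n : ℕ} :
    p ∈ formMultiples A n ↔ ∃ r, r.IsHomogeneous n ∧ A * r = p := Iff.rfl

instance [Finite σ] (n : ℕ) : Module.Finite K (formMultiples A n) :=
  Module.Finite.map _ _

lemma finrank_formMultiples [Fintype σ] (hA0 : A ≠ 0) (n : ℕ) :
    finrank K (formMultiples A n) = (Fintype.card σ).multichoose n := by
  rw [← finrank_homogeneousSubmodule (R := K)]
  exact (Submodule.equivMapOfInjective _ (mul_right_injective₀ hA0) _).finrank_eq.symm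

lemma formMultiples_inf_le (hA : A.IsHomogeneous a) (hA0 : A ≠ 0) (hAB : IsRelPrime A B)
    (m n : ℕ) : formMultiples A m ⊓ formMultiples B (a + n) ≤ formMultiples (A * B) n := by
  rintro _ ⟨⟨r, -, rfl⟩, ⟨s, hs, hrs : B * s = A * r⟩⟩
  obtain ⟨w, rfl⟩ : A ∣ s := hAB.dvd_of_dvd_mul_left (Dvd.intro r hrs.symm)
  refine mem_formMultiples.2 ⟨w, ?_, by rw [mul_assoc, mul_left_comm, hrs]; rfl⟩
  rcases eq_or_ne w 0 with rfl | hw0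
  · exact isHomogeneous_zero σ K n
  · have hAw0 := mul_ne_zero hA0 hw0
    have hw := isHomogeneous_totalDegree_of_dvd hs hAw0 (dvd_mul_left w A)
    rwa [← add_left_cancel ((hA.mul hw).inj_right hs hAw0)]

lemma formMultiples_le_formsVanishingOn (hA : A.IsHomogeneous a) {S : Finset (ℙ K (σ → K))}
    (hAS : ∀ P ∈ S, eval P.rep A = 0) (n : ℕ) :
    formMultiples A n ≤ formsVanishingOn S (a + n) := by
  rintro _ ⟨r, hr, rfl⟩
  exact mem_formsVanishingOn.2 ⟨hA.mul hr, fun P hP => by simp [hAS P hP]⟩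

end Forms

section Bezout

lemma two_mul_multichoose_three (n : ℕ) : 2 * Nat.multichoose 3 n = (n + 1) * (n + 2) := by
  induction n with
  | zero => simp
  | succ n ih =>
    rw [Nat.multichoose_succ_succ, Nat.multichoose_two]
    linarith

-- The forms `A * r + B * s` of degree `a + b + n` vanish on `S`, and from `n = #S` on the points of
-- `S` impose independent conditions; the claim is the comparison of the two dimensions.
theorem card_common_zeros_le_mul_of_isRelPrime {K : Type*} [Field K] {A B : MvPolynomial (Fin 3) K}
    {a b : ℕ} (hA : A.IsHomogeneous a) (hB : B.IsHomogeneous b) (hA0 : A ≠ 0) (hB0 : B ≠ 0)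
    (hAB : IsRelPrime A B) {S : Finset (ℙ K (Fin 3 → K))} (hAS : ∀ P ∈ S, eval P.rep A = 0)
    (hBS : ∀ P ∈ S, eval P.rep B = 0) : S.card ≤ a * b := by
  set n := S.card
  have finrank_sup : finrank K ↥(formMultiples A (b + n) ⊔ formMultiples B (a + n)) ≤
      finrank K (formsVanishingOn S (a + b + n)) := by
    refine Submodule.finrank_mono (sup_le ?_ ?_)
    · simpa only [add_assoc] using formMultiples_le_formsVanishingOn hA hAS (b + n)
    · simpa only [add_assoc, add_left_comm] using formMultiples_le_formsVanishingOn hB hBS (a + n)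
  have finrank_inf : finrank K ↥(formMultiples A (b + n) ⊓ formMultiples B (a + n)) ≤
      Nat.multichoose 3 n := by
    simpa only [finrank_formMultiples (mul_ne_zero hA0 hB0), Fintype.card_fin] using
      Submodule.finrank_mono (formMultiples_inf_le hA hA0 hAB (b + n) n)
  have finrank_sup_add_inf :=
    Submodule.finrank_sup_add_finrank_inf_eq (formMultiples A (b + n)) (formMultiples B (a + n))
  have finrank_vanishing :=
    finrank_formsVanishingOn_add_card_le (S := S) (n := a + b + n) (by omega)
  rw [finrank_formMultiples hA0, finrank_formMultiples hB0, Fintype.card_fin]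
    at finrank_sup_add_inf
  rw [finrank_homogeneousSubmodule, Fintype.card_fin] at finrank_vanishing
  have two_mul_a := two_mul_multichoose_three (a + n)
  have two_mul_b := two_mul_multichoose_three (b + n)
  have two_mul_ab := two_mul_multichoose_three (a + b + n)
  have two_mul_n := two_mul_multichoose_three n
  linarith

end Bezout

section TotalDegree

lemma totalDegree_map_of_injective {σ R S : Type*} [CommSemiring R] [CommSemiring S]
    {φ : R →+* S} (hφ : Function.Injective φ) (p : MvPolynomial σ R) :
    (map φ p).totalDegree = p.totalDegree := by
  simp only [totalDegree, support_map_of_injective p hφ]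

lemma isUnit_iff_totalDegree_eq_zero {σ K : Type*} [Field K] {p : MvPolynomial σ K} (hp : p ≠ 0) :
    IsUnit p ↔ p.totalDegree = 0 := by
  refine isUnit_iff_totalDegree_of_isReduced.trans (and_iff_right_of_imp fun h => ?_)
  rw [isUnit_iff_ne_zero]
  exact fun hc => hp (by rw [totalDegree_eq_zero_iff_eq_C.1 h, hc, C_0])

lemma exists_irreducible_dvd_two_mul_totalDegree_le {σ R : Type*} [CommRing R] [IsDomain R]
    [UniqueFactorizationMonoid R] {f : MvPolynomial σ R} (hf0 : f ≠ 0) (hfu : ¬ IsUnit f)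
    (hf : ¬ Irreducible f) : ∃ g, Irreducible g ∧ g ∣ f ∧ 2 * g.totalDegree ≤ f.totalDegree := by
  obtain ⟨a, b, ha, hb, rfl⟩ : ∃ a b, ¬ IsUnit a ∧ ¬ IsUnit b ∧ f = a * b := by
    simpa [irreducible_iff, hfu, and_comm, and_assoc] using hf
  wlog hab : a.totalDegree ≤ b.totalDegree generalizing a b
  · simpa only [mul_comm] using
      this b a hb ha (by rwa [mul_comm]) (by rwa [mul_comm]) (by rwa [mul_comm]) (le_of_not_ge hab)
  have ha0 := left_ne_zero_of_mul hf0
  obtain ⟨g, hg, c, rfl⟩ := WfDvdMonoid.exists_irreducible_factor ha ha0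
  have hgc := totalDegree_mul_of_isDomain (left_ne_zero_of_mul ha0) (right_ne_zero_of_mul ha0)
  refine ⟨g, hg, (dvd_mul_right g c).mul_right b, ?_⟩
  rw [totalDegree_mul_of_isDomain ha0 (right_ne_zero_of_mul hf0)]
  omega

end TotalDegree

section CoeffFunctional

variable {σ F K : Type*} [CommSemiring F] [CommSemiring K] [Algebra F K]

/-- The `F`-linear map from polynomials over `K` to polynomials over `F` that applies the linear
functional `ℓ` to each coefficient. -/
noncomputable def mapCoeffs (ℓ : Dual F K) (p : MvPolynomial σ K) : MvPolynomial σ F :=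
  AddMonoidAlgebra.map (ℓ : K →+ F) p

variable (ℓ : Dual F K)

@[simp]
lemma coeff_mapCoeffs (p : MvPolynomial σ K) (m : σ →₀ ℕ) :
    coeff m (mapCoeffs ℓ p) = ℓ (coeff m p) := by
  rfl

lemma mapCoeffs_mul_map (p : MvPolynomial σ K) (a : MvPolynomial σ F) :
    mapCoeffs ℓ (p * map (algebraMap F K) a) = mapCoeffs ℓ p * a := by
  classical
  ext m
  simp only [coeff_mapCoeffs, coeff_mul, map_sum, coeff_map]
  refine Finset.sum_congr rfl fun x _ => ?_
  rw [mul_comm, ← Algebra.smul_def, map_smul, smul_eq_mul, mul_comm]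

lemma support_mapCoeffs_subset (p : MvPolynomial σ K) : (mapCoeffs ℓ p).support ⊆ p.support :=
  fun m => by
    simpa only [MvPolynomial.mem_support_iff, coeff_mapCoeffs] using mt fun h => by rw [h, map_zero]

lemma totalDegree_mapCoeffs_le (p : MvPolynomial σ K) :
    (mapCoeffs ℓ p).totalDegree ≤ p.totalDegree :=
  Finset.sup_mono (support_mapCoeffs_subset ℓ p)

lemma isHomogeneous_mapCoeffs {p : MvPolynomial σ K} {n : ℕ} (hp : p.IsHomogeneous n) :
    (mapCoeffs ℓ p).IsHomogeneous n := fun m hm =>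
  hp fun h => hm (by rw [coeff_mapCoeffs, h, map_zero])

lemma eval_mapCoeffs (p : MvPolynomial σ K) (v : σ → F) :
    eval v (mapCoeffs ℓ p) = ℓ (eval (algebraMap F K ∘ v) p) := by
  rw [eval_eq, eval_eq, map_sum, Finset.sum_subset (support_mapCoeffs_subset ℓ p)
    fun m _ hm => by rw [notMem_support_iff.1 hm, zero_mul]]
  refine Finset.sum_congr rfl fun m _ => ?_
  have eval_monomial : ∏ i ∈ m.support, (algebraMap F K ∘ v) i ^ m i =
      algebraMap F K (∏ i ∈ m.support, v i ^ m i) := by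
    simp only [Function.comp_apply, map_prod, map_pow]
  rw [coeff_mapCoeffs, eval_monomial, mul_comm (coeff m p), ← Algebra.smul_def, map_smul,
    smul_eq_mul, mul_comm]

lemma exists_mapCoeffs_ne_zero [Module.Projective F K] {p : MvPolynomial σ K} (hp : p ≠ 0) :
    ∃ ℓ : Dual F K, mapCoeffs ℓ p ≠ 0 := by
  obtain ⟨m, hm⟩ := MvPolynomial.ne_zero_iff.1 hp
  obtain ⟨ℓ, hℓ⟩ := not_forall.1 (mt (Module.forall_dual_apply_eq_zero_iff F _).1 hm)
  exact ⟨ℓ, MvPolynomial.ne_zero_iff.2 ⟨m, hℓ⟩⟩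

end CoeffFunctional

section IrreducibleOverSubfield

variable {σ F K : Type*} [Field F] [Field K] [Algebra F K]
  {f : MvPolynomial σ F} {g : MvPolynomial σ K}

lemma map_algebraMap_ne_zero (hf : f ≠ 0) : map (algebraMap F K) f ≠ 0 :=
  (map_ne_zero_iff _ (map_injective _ (algebraMap F K).injective)).2 hf

lemma isUnit_map_algebraMap_iff : IsUnit (map (algebraMap F K) f) ↔ IsUnit f := by
  rcases eq_or_ne f 0 with rfl | hf
  · simp
  · rw [isUnit_iff_totalDegree_eq_zero (map_algebraMap_ne_zero hf),
      totalDegree_map_of_injective (algebraMap F K).injective, isUnit_iff_totalDegree_eq_zero hf]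

theorem dvd_of_dvd_map_of_dvd_map (hf : Irreducible f) (hgf : g ∣ map (algebraMap F K) f)
    (hg : ¬ IsUnit g) {a : MvPolynomial σ F} (hga : g ∣ map (algebraMap F K) a) : f ∣ a := by
  obtain ⟨h, hgh⟩ := hgf
  obtain ⟨c, hgc⟩ := hga
  by_contra hfa
  have hgh0 : g * h ≠ 0 := hgh ▸ map_algebraMap_ne_zero hf.ne_zero
  have totalDegree_lt : h.totalDegree < f.totalDegree := by
    rw [← totalDegree_map_of_injective (algebraMap F K).injective f, hgh,
      totalDegree_mul_of_isDomain (left_ne_zero_of_mul hgh0) (right_ne_zero_of_mul hgh0)]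
    have totalDegree_g := mt (isUnit_iff_totalDegree_eq_zero (left_ne_zero_of_mul hgh0)).2 hg
    omega
  obtain ⟨ℓ, hℓ⟩ := exists_mapCoeffs_ne_zero (F := F) (right_ne_zero_of_mul hgh0)
  have cross : mapCoeffs ℓ h * a = mapCoeffs ℓ c * f := by
    rw [← mapCoeffs_mul_map, ← mapCoeffs_mul_map, hgh, hgc]
    congr 1
    ring
  have dvd : f ∣ mapCoeffs ℓ h :=
    (hf.prime.dvd_or_dvd (Dvd.intro_left _ cross.symm)).resolve_right hfa
  exact ((totalDegree_le_of_dvd_of_isDomain dvd hℓ).trans (totalDegree_mapCoeffs_le ℓ h)).not_gt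
    totalDegree_lt

attribute [local instance] MvPolynomial.algebraMvPolynomial in
theorem eval_eq_zero_of_dvd_map [Algebra.IsAlgebraic F K] (hf : Irreducible f)
    (hgf : g ∣ map (algebraMap F K) f) (hg : ¬ IsUnit g) {v : σ → F} (hv : eval v f = 0) :
    eval (algebraMap F K ∘ v) g = 0 := by
  have comap_le : (Ideal.span {g}).comap (algebraMap (MvPolynomial σ F) (MvPolynomial σ K)) ≤
      RingHom.ker (eval v) := fun a ha => by
    obtain ⟨b, rfl⟩ := dvd_of_dvd_map_of_dvd_map hf hgf hg (Ideal.mem_span_singleton.1 ha)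
    rw [RingHom.mem_ker, map_mul, hv, zero_mul]
  have := RingHom.ker_isPrime (eval v)
  obtain ⟨Q, hgQ, hQ, comap_eq⟩ :=
    Ideal.exists_ideal_over_prime_of_isIntegral (RingHom.ker (eval v)) _ comap_le
  have X_sub_C_mem (i : σ) : X i - C (algebraMap F K (v i)) ∈ Q := by
    have mem_comap : X i - C (v i) ∈ Q.comap (map (algebraMap F K)) :=
      comap_eq.ge (by rw [RingHom.mem_ker, map_sub, eval_X, eval_C, sub_self])
    simpa only [Ideal.mem_comap, map_sub, map_X, map_C] using mem_comap
  have mk_eq : Ideal.Quotient.mk Q g = Ideal.Quotient.mk Q (C (eval (algebraMap F K ∘ v) g)) := by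
    have : Ideal.Quotient.mk Q = ((Ideal.Quotient.mk Q).comp C).comp (eval (algebraMap F K ∘ v)) :=
      ringHom_ext (fun r => by simp) fun i => by
        simpa using Ideal.Quotient.eq.2 (X_sub_C_mem i)
    exact RingHom.congr_fun this g
  rw [Ideal.Quotient.eq_zero_iff_mem.2 (hgQ (Ideal.mem_span_singleton_self g)), eq_comm,
    ← RingHom.comp_apply] at mk_eq
  exact (map_eq_zero _).1 mk_eq

end IrreducibleOverSubfield

section BaseChange

variable {σ F K : Type*} [Field F] [Field K] [Algebra F K]

variable (K) in
/-- The inclusion of the points of the projective space over `F` into the points over the extension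
field `K`, computed on the representative `P.rep`. -/
noncomputable def extendScalars (P : ℙ F (σ → F)) : ℙ K (σ → K) :=
  .mk K (algebraMap F K ∘ P.rep) fun h => P.rep_nonzero <| funext fun i =>
    (map_eq_zero (algebraMap F K)).1 (congrFun h i)

lemma extendScalars_injective : Function.Injective (extendScalars K (σ := σ) (F := F)) := by
  intro P Q hPQ
  by_contra hne
  obtain ⟨i, j, hij⟩ := exists_mul_ne_mul_of_ne hne
  obtain ⟨c, hc⟩ := (Projectivization.mk_eq_mk_iff' K _ _ _ _).1 hPQ
  have smul_rep (i : σ) : c * algebraMap F K (Q.rep i) = algebraMap F K (P.rep i) := congrFun hc i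
  refine hij ((algebraMap F K).injective ?_)
  rw [map_mul, map_mul, ← smul_rep, ← smul_rep]
  ring

lemma eval_extendScalars_rep_eq_zero_iff {g : MvPolynomial σ K} {n : ℕ} (hg : g.IsHomogeneous n)
    (P : ℙ F (σ → F)) :
    eval (extendScalars K P).rep g = 0 ↔ eval (algebraMap F K ∘ P.rep) g = 0 :=
  eval_rep_mk_eq_zero_iff hg _

end BaseChange

section Curve

variable {F K : Type*} [Field F] [Field K] [Algebra F K] [Algebra.IsAlgebraic F K]
  {f : MvPolynomial (Fin 3) F} {d : ℕ}

theorem card_le_totalDegree_sq_of_dvd_map (hfd : f.IsHomogeneous d) (hf : Irreducible f)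
    {g : MvPolynomial (Fin 3) K} (hg : Irreducible g) (hgf : g ∣ map (algebraMap F K) f)
    (hgd : g.totalDegree < d) {S : Finset (ℙ F (Fin 3 → F))} (hS : ∀ P ∈ S, eval P.rep f = 0) :
    S.card ≤ g.totalDegree ^ 2 := by
  have hgh : g.IsHomogeneous g.totalDegree :=
    isHomogeneous_totalDegree_of_dvd (hfd.map _) (map_algebraMap_ne_zero hf.ne_zero) hgf
  have hgS (P) (hP : P ∈ S) : eval (algebraMap F K ∘ P.rep) g = 0 :=
    eval_eq_zero_of_dvd_map hf hgf hg.not_isUnit (hS P hP)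
  obtain ⟨ℓ, hℓ⟩ := exists_mapCoeffs_ne_zero (F := F) hg.ne_zero
  let b := map (algebraMap F K) (mapCoeffs ℓ g)
  have hbh : b.IsHomogeneous g.totalDegree := (isHomogeneous_mapCoeffs ℓ hgh).map _
  have hbS (P) (hP : P ∈ S) : eval (algebraMap F K ∘ P.rep) b = 0 := by
    rw [eval_map, ← eval₂_comp, eval_mapCoeffs, hgS P hP, map_zero, map_zero]
  have relPrime : IsRelPrime g b := hg.isRelPrime_iff_not_dvd.2 fun hgb => hgd.not_ge <| by
    rw [← hfd.totalDegree hf.ne_zero]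
    exact (totalDegree_le_of_dvd_of_isDomain
      (dvd_of_dvd_map_of_dvd_map hf hgf hg.not_isUnit hgb) hℓ).trans (totalDegree_mapCoeffs_le ℓ g)
  rw [← S.card_map ⟨_, extendScalars_injective (K := K)⟩, sq]
  refine card_common_zeros_le_mul_of_isRelPrime hgh hbh hg.ne_zero (map_algebraMap_ne_zero hℓ)
    relPrime ?_ ?_
  · simpa [eval_extendScalars_rep_eq_zero_iff hgh] using hgS
  · simpa [eval_extendScalars_rep_eq_zero_iff hbh] using hbS

end Curve

theorem stmt_6_general (d : ℕ) {F : Type} {K : Type*} [Field F] [Field K] [Algebra F K]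
    [Algebra.IsAlgebraic F K] (f : MvPolynomial (Fin 3) F) (hfdeg : f.IsHomogeneous d)
    (hirr : Irreducible f) (hred : ¬ Irreducible (map (algebraMap F K) f)) :
    (hypersurfacePts f).Finite ∧ ((hypersurfacePts f).ncard : ℚ) ≤ ((d : ℚ) / 2) ^ 2 ∧
      ∀ P ∈ hypersurfacePts f, ∀ g : MvPolynomial (Fin 3) K, Irreducible g →
        g ∣ map (algebraMap F K) f → eval (fun i => algebraMap F K (P.rep i)) g = 0 := by
  obtain ⟨g, hg, hgf, hgd⟩ := exists_irreducible_dvd_two_mul_totalDegree_le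
    (map_algebraMap_ne_zero hirr.ne_zero) (mt isUnit_map_algebraMap_iff.1 hirr.not_isUnit) hred
  have totalDegree_f : (map (algebraMap F K) f).totalDegree = d := by
    rw [totalDegree_map_of_injective (algebraMap F K).injective, hfdeg.totalDegree hirr.ne_zero]
  have totalDegree_g := mt (isUnit_iff_totalDegree_eq_zero hg.ne_zero).2 hg.not_isUnit
  have card_le {S : Finset (ℙ F (Fin 3 → F))} (hS : (S : Set _) ⊆ hypersurfacePts f) :
      S.card ≤ g.totalDegree ^ 2 :=
    card_le_totalDegree_sq_of_dvd_map hfdeg hirr hg hgf (by omega) fun _ hP => hS hP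
  have finite : (hypersurfacePts f).Finite := Set.not_infinite.1 fun hinf => by
    obtain ⟨S, hS, hcard⟩ := hinf.exists_subset_card_eq (g.totalDegree ^ 2 + 1)
    exact (card_le hS).not_gt (by omega)
  refine ⟨finite, ?_, fun P hP g hg hgf => eval_eq_zero_of_dvd_map hirr hgf hg.not_isUnit hP⟩
  calc ((hypersurfacePts f).ncard : ℚ) ≤ (g.totalDegree : ℚ) ^ 2 := by
        rw [Set.ncard_eq_toFinset_card _ finite]
        exact_mod_cast card_le finite.coe_toFinset.subset
    _ ≤ ((d : ℚ) / 2) ^ 2 := by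
        have : 2 * (g.totalDegree : ℚ) ≤ d := by exact_mod_cast totalDegree_f ▸ hgd
        gcongr
        linarith

/-- If `q` is a prime power and `C` is a plane curve of degree `q+1` defined over
`GF(q²)` by a polynomial `f` which is irreducible over `GF(q²)` but not absolutely
irreducible, then the number `N` of `GF(q²)`-rational points of `C` satisfies
`N ≤ ((q+1)/2)²`; moreover every `GF(q²)`-rational point of `C` lies on every
absolutely irreducible component of `C` over the algebraic closure. -/
theorem stmt_6 (q : ℕ) (hq : ∃ p k : ℕ, p.Prime ∧ 0 < k ∧ q = p ^ k)
    (F : Type) [Field F] [Fintype F] (hcardF : Fintype.card F = q ^ 2)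
    (f : MvPolynomial (Fin 3) F) (hfdeg : f.IsHomogeneous (q + 1))
    (hirr : Irreducible f)
    (hnotabs : ¬ Irreducible
      (MvPolynomial.map (algebraMap F (AlgebraicClosure F)) f)) :
    ((hypersurfacePts f).ncard : ℚ) ≤ (((q : ℚ) + 1) / 2) ^ 2 ∧
      ∀ P ∈ hypersurfacePts f,
        ∀ g : MvPolynomial (Fin 3) (AlgebraicClosure F), Irreducible g →
          g ∣ MvPolynomial.map (algebraMap F (AlgebraicClosure F)) f →
          MvPolynomial.eval (fun i => algebraMap F (AlgebraicClosure F) (P.rep i)) g = 0 := by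
  simpa using (stmt_6_general (q + 1) f hfdeg hirr hnotabs).2
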